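/- arXiv:2312.14572 — 3 statements merged into one kernel-verified Lean document; each statement's English description precedes it below -/
import Mathlib

section
/- Let L ∈ ℝ^{mn×mn} be a symmetric matrix and let (π, P) be a GW-SDP-feasible pair that minimizes ⟨L, ·⟩ over all GW-SDP-feasible pairs. If ⟨L, P⟩ = vec(π)ᵀ L vec(π), then π is a global minimizer of the Gromov-Wasserstein objective: vec(π)ᵀ L vec(π) ≤ vec(π')ᵀ L vec(π') for every π' ∈ Π(α,β). -/
/-!
GW-SDP is a relaxation of the Gromov-Wasserstein problem: a coupling `π'` lifts to the feasible
pair `(π', vec(π') vec(π')ᵀ)` (`feasible_lift`), whose SDP value is the Gromov-Wasserstein value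
of `π'` (`trInner_lift`). Hence the SDP optimum bounds `gwObj L π'` from below for every coupling
`π'`, and when the optimum equals `gwObj L π`, the coupling `π` is a global minimizer.
-/

open Matrix BigOperators

noncomputable section

/-- A probability vector: entrywise nonnegative with entries summing to 1. -/
def IsProbVec {k : ℕ} (α : Fin k → ℝ) : Prop :=
  (∀ i, 0 ≤ α i) ∧ ∑ i, α i = 1

/-- `π ∈ Π(α,β)`: nonnegative entries, row sums `α`, column sums `β`. -/
def IsCoupling {m n : ℕ} (α : Fin m → ℝ) (β : Fin n → ℝ)
    (π : Matrix (Fin m) (Fin n) ℝ) : Prop :=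
  (∀ i j, 0 ≤ π i j) ∧ (∀ i, ∑ j, π i j = α i) ∧ (∀ j, ∑ i, π i j = β j)

/-- Vectorization of an `m × n` matrix, indexed by pairs `(i, j)`. -/
def vecz {m n : ℕ} (π : Matrix (Fin m) (Fin n) ℝ) : Fin m × Fin n → ℝ :=
  fun p => π p.1 p.2

/-- `a_i = vec(e_i 1ₙᵀ)`: indicator of the entries in row `i`. -/
def aVec {m n : ℕ} (i : Fin m) : Fin m × Fin n → ℝ :=
  fun p => if p.1 = i then 1 else 0

/-- `b_j = vec(1ₘ e_jᵀ)`: indicator of the entries in column `j`. -/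
def bVec {m n : ℕ} (j : Fin n) : Fin m × Fin n → ℝ :=
  fun p => if p.2 = j then 1 else 0

/-- The `(mn+1) × (mn+1)` block matrix `[[P, x], [xᵀ, c]]`. -/
def blockMat {m n : ℕ} (P : Matrix (Fin m × Fin n) (Fin m × Fin n) ℝ)
    (x : Fin m × Fin n → ℝ) (c : ℝ) :
    Matrix (Option (Fin m × Fin n)) (Option (Fin m × Fin n)) ℝ :=
  Matrix.of fun u v =>
    match u, v with
    | some a, some b => P a b
    | some a, none => x a
    | none, some b => x b
    | none, none => c

/-- The trace inner product `⟨L, P⟩ = ∑_{u,v} L_{uv} P_{uv}`. -/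
def trInner {m n : ℕ} (L P : Matrix (Fin m × Fin n) (Fin m × Fin n) ℝ) : ℝ :=
  ∑ u, ∑ v, L u v * P u v

/-- The Gromov-Wasserstein objective `vec(π)ᵀ L vec(π)`. -/
def gwObj {m n : ℕ} (L : Matrix (Fin m × Fin n) (Fin m × Fin n) ℝ)
    (π : Matrix (Fin m) (Fin n) ℝ) : ℝ :=
  vecz π ⬝ᵥ L.mulVec (vecz π)

/-- Feasibility for the proposed SDP relaxation (GW-SDP). -/
def GWSDPFeasible {m n : ℕ} (α : Fin m → ℝ) (β : Fin n → ℝ)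
    (π : Matrix (Fin m) (Fin n) ℝ)
    (P : Matrix (Fin m × Fin n) (Fin m × Fin n) ℝ) : Prop :=
  IsCoupling α β π ∧
  (blockMat P (vecz π) 1).PosSemidef ∧
  (∀ i, P.mulVec (aVec i) = α i • vecz π) ∧
  (∀ j, P.mulVec (bVec j) = β j • vecz π) ∧
  (∀ u v, 0 ≤ P u v)

/-- Feasibility for the standard SDP relaxation. -/
def StdSDPFeasible {m n : ℕ} (α : Fin m → ℝ) (β : Fin n → ℝ)
    (π : Matrix (Fin m) (Fin n) ℝ)
    (P : Matrix (Fin m × Fin n) (Fin m × Fin n) ℝ) : Prop :=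
  IsCoupling α β π ∧ (blockMat P (vecz π) 1).PosSemidef

/-- The SDP objective at the rank-one lift of `π` is the Gromov-Wasserstein objective at `π`. -/
lemma trInner_lift {m n : ℕ} (L : Matrix (Fin m × Fin n) (Fin m × Fin n) ℝ)
    (π : Matrix (Fin m) (Fin n) ℝ) :
    trInner L (vecMulVec (vecz π) (vecz π)) = gwObj L π := by
  simp only [trInner, gwObj, dotProduct, mulVec, vecMulVec_apply, Finset.mul_sum]
  refine Finset.sum_congr rfl fun u _ => Finset.sum_congr rfl fun v _ => ?_
  ring

lemma vecz_dotProduct_aVec {m n : ℕ} (π : Matrix (Fin m) (Fin n) ℝ) (i : Fin m) :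
    vecz π ⬝ᵥ aVec i = ∑ j, π i j := by
  simp only [dotProduct, vecz, aVec, Fintype.sum_prod_type_right, mul_ite, mul_one, mul_zero,
    Finset.sum_ite_eq', Finset.mem_univ, if_true]

lemma vecz_dotProduct_bVec {m n : ℕ} (π : Matrix (Fin m) (Fin n) ℝ) (j : Fin n) :
    vecz π ⬝ᵥ bVec j = ∑ i, π i j := by
  simp only [dotProduct, vecz, bVec, Fintype.sum_prod_type, mul_ite, mul_one, mul_zero,
    Finset.sum_ite_eq', Finset.mem_univ, if_true]

/-- With `x = vec(π)`, the block matrix `[[x xᵀ, x], [xᵀ, 1]]` is `(x, 1) (x, 1)ᵀ`, and the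
marginal equations for `x xᵀ` follow from those for `π`. -/
lemma feasible_lift {m n : ℕ} {α : Fin m → ℝ} {β : Fin n → ℝ}
    {π : Matrix (Fin m) (Fin n) ℝ} (h : IsCoupling α β π) :
    GWSDPFeasible α β π (vecMulVec (vecz π) (vecz π)) := by
  refine ⟨h, ?_, fun i => ?_, fun j => ?_, fun u v => mul_nonneg (h.1 _ _) (h.1 _ _)⟩
  · have hx : blockMat (vecMulVec (vecz π) (vecz π)) (vecz π) 1 =
        vecMulVec (fun o => o.elim 1 (vecz π)) (star fun o => o.elim 1 (vecz π)) := by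
      ext u v
      cases u <;> cases v <;> simp [blockMat, vecMulVec_apply]
    rw [hx]
    exact posSemidef_vecMulVec_self_star _
  · rw [vecMulVec_mulVec, vecz_dotProduct_aVec, h.2.1, op_smul_eq_smul]
  · rw [vecMulVec_mulVec, vecz_dotProduct_bVec, h.2.2, op_smul_eq_smul]

/-- If an optimal GW-SDP pair `(π, P)` satisfies `⟨L, P⟩ = vec(π)ᵀ L vec(π)`, then `π` is a
global minimizer of the Gromov-Wasserstein objective over `Π(α,β)`. -/
theorem stmt_2 {m n : ℕ} (α : Fin m → ℝ) (β : Fin n → ℝ)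
    (hα : IsProbVec α) (hβ : IsProbVec β)
    (L : Matrix (Fin m × Fin n) (Fin m × Fin n) ℝ) (hL : L.IsSymm)
    (π : Matrix (Fin m) (Fin n) ℝ) (P : Matrix (Fin m × Fin n) (Fin m × Fin n) ℝ)
    (hfeas : GWSDPFeasible α β π P)
    (hmin : ∀ π' P', GWSDPFeasible α β π' P' → trInner L P ≤ trInner L P')
    (heq : trInner L P = gwObj L π) :
    ∀ π', IsCoupling α β π' → gwObj L π ≤ gwObj L π' := by
  intro π' h
  rw [← heq, ← trInner_lift L π']
  exact hmin _ _ (feasible_lift h)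
end
end

section
/- (Weak duality between GW-Dual and the Gromov-Wasserstein problem.) Let L ∈ ℝ^{mn×mn} be symmetric and let (λ, μ, η, θ, Z, y, t) be GW-Dual-feasible dual variables. Then for every coupling π ∈ Π(α,β), λᵀα + μᵀβ − t ≤ vec(π)ᵀ L vec(π). -/
/-!
Let `x = vec π`. Evaluating the positive semidefinite block matrix `[[H, y], [yᵀ, t]]` at the
vector `(x, 1)` gives `0 ≤ xᵀHx + 2 y·x + t`. Since `a_i·x = α_i` and `b_j·x = β_j` are the
marginal constraints, `xᵀHx = xᵀLx - xᵀZx + ∑ α_i (η^i·x) + ∑ β_j (θ^j·x)`, where `xᵀZx ≥ 0`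
because `Z` and `x` are entrywise nonnegative. Finally `g ≤ 0` and `x ≥ 0` give
`0 ≥ g·x = λᵀα + μᵀβ + ∑ α_i (η^i·x) + ∑ β_j (θ^j·x) + 2 y·x`, and adding up these inequalities
yields the bound (`blockMat_quadForm`, `dualH_quadForm` and `dualG_dotProduct` compute the three
expressions).
-/

open Matrix BigOperators

noncomputable section

/-- The matrix `H` appearing in the GW-Dual program. -/
def dualH {m n : ℕ} (L Z : Matrix (Fin m × Fin n) (Fin m × Fin n) ℝ)
    (η : Fin m → (Fin m × Fin n → ℝ)) (θ : Fin n → (Fin m × Fin n → ℝ)) :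
    Matrix (Fin m × Fin n) (Fin m × Fin n) ℝ :=
  L - Z
    + (1 / 2 : ℝ) • ∑ i, (Matrix.vecMulVec (η i) (aVec i) + Matrix.vecMulVec (aVec i) (η i))
    + (1 / 2 : ℝ) • ∑ j, (Matrix.vecMulVec (θ j) (bVec j) + Matrix.vecMulVec (bVec j) (θ j))

/-- The vector `g` appearing in the GW-Dual program. -/
def dualG {m n : ℕ} (α : Fin m → ℝ) (β : Fin n → ℝ)
    (lam : Fin m → ℝ) (mu : Fin n → ℝ)
    (η : Fin m → (Fin m × Fin n → ℝ)) (θ : Fin n → (Fin m × Fin n → ℝ))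
    (y : Fin m × Fin n → ℝ) : Fin m × Fin n → ℝ :=
  (∑ i, (lam i • aVec i + α i • η i)) + (∑ j, (mu j • bVec j + β j • θ j)) + (2 : ℝ) • y

/-- Feasibility for the GW-Dual program. -/
def GWDualFeasible {m n : ℕ} (α : Fin m → ℝ) (β : Fin n → ℝ)
    (L : Matrix (Fin m × Fin n) (Fin m × Fin n) ℝ)
    (lam : Fin m → ℝ) (mu : Fin n → ℝ)
    (η : Fin m → (Fin m × Fin n → ℝ)) (θ : Fin n → (Fin m × Fin n → ℝ))
    (Z : Matrix (Fin m × Fin n) (Fin m × Fin n) ℝ)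
    (y : Fin m × Fin n → ℝ) (t : ℝ) : Prop :=
  (blockMat (dualH L Z η θ) y t).PosSemidef ∧
  (∀ u, dualG α β lam mu η θ y u ≤ 0) ∧
  (∀ u v, 0 ≤ Z u v)

theorem aVec_dotProduct_vecz {m n : ℕ} {α : Fin m → ℝ} {β : Fin n → ℝ}
    {π : Matrix (Fin m) (Fin n) ℝ} (hπ : IsCoupling α β π) (i : Fin m) :
    aVec i ⬝ᵥ vecz π = α i := by
  rw [← hπ.2.1 i]
  simp [dotProduct, aVec, vecz, Fintype.sum_prod_type_right]

theorem bVec_dotProduct_vecz {m n : ℕ} {α : Fin m → ℝ} {β : Fin n → ℝ}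
    {π : Matrix (Fin m) (Fin n) ℝ} (hπ : IsCoupling α β π) (j : Fin n) :
    bVec j ⬝ᵥ vecz π = β j := by
  rw [← hπ.2.2 j]
  simp [dotProduct, bVec, vecz, Fintype.sum_prod_type]

theorem blockMat_quadForm {m n : ℕ} (P : Matrix (Fin m × Fin n) (Fin m × Fin n) ℝ)
    (y x : Fin m × Fin n → ℝ) (c : ℝ) :
    (fun o : Option (Fin m × Fin n) => o.elim 1 x) ⬝ᵥ
        (blockMat P y c).mulVec (fun o => o.elim 1 x) =
      x ⬝ᵥ P.mulVec x + 2 * (y ⬝ᵥ x) + c := by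
  have hxy : x ⬝ᵥ y = y ⬝ᵥ x := dotProduct_comm x y
  simp only [dotProduct] at hxy
  simp only [dotProduct, mulVec, blockMat, Fintype.sum_option, Option.elim, of_apply, mul_one,
    one_mul, mul_add, Finset.sum_add_distrib, hxy]
  ring

theorem dotProduct_vecMulVec_mulVec {ι : Type*} [Fintype ι] (u v x : ι → ℝ) :
    x ⬝ᵥ (vecMulVec u v).mulVec x = (u ⬝ᵥ x) * (v ⬝ᵥ x) := by
  rw [vecMulVec_mulVec, dotProduct_smul, dotProduct_comm x u, op_smul_eq_mul]

theorem dualH_quadForm {m n : ℕ} {α : Fin m → ℝ} {β : Fin n → ℝ}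
    (L Z : Matrix (Fin m × Fin n) (Fin m × Fin n) ℝ)
    (η : Fin m → (Fin m × Fin n → ℝ)) (θ : Fin n → (Fin m × Fin n → ℝ))
    {π : Matrix (Fin m) (Fin n) ℝ} (hπ : IsCoupling α β π) :
    vecz π ⬝ᵥ (dualH L Z η θ).mulVec (vecz π) =
      gwObj L π - vecz π ⬝ᵥ Z.mulVec (vecz π)
        + ∑ i, α i * (η i ⬝ᵥ vecz π) + ∑ j, β j * (θ j ⬝ᵥ vecz π) := by
  simp only [dualH, gwObj, add_mulVec, sub_mulVec, smul_mulVec, sum_mulVec, dotProduct_add,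
    dotProduct_sub, dotProduct_smul, dotProduct_sum, dotProduct_vecMulVec_mulVec,
    aVec_dotProduct_vecz hπ, bVec_dotProduct_vecz hπ, smul_eq_mul, Finset.mul_sum]
  congr 1
  · congr 1
    exact Finset.sum_congr rfl fun i _ => by ring
  · exact Finset.sum_congr rfl fun j _ => by ring

theorem dualG_dotProduct {m n : ℕ} {α : Fin m → ℝ} {β : Fin n → ℝ}
    (lam : Fin m → ℝ) (mu : Fin n → ℝ)
    (η : Fin m → (Fin m × Fin n → ℝ)) (θ : Fin n → (Fin m × Fin n → ℝ))
    (y : Fin m × Fin n → ℝ) {π : Matrix (Fin m) (Fin n) ℝ} (hπ : IsCoupling α β π) :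
    dualG α β lam mu η θ y ⬝ᵥ vecz π =
      lam ⬝ᵥ α + mu ⬝ᵥ β + ∑ i, α i * (η i ⬝ᵥ vecz π) + ∑ j, β j * (θ j ⬝ᵥ vecz π)
        + 2 * (y ⬝ᵥ vecz π) := by
  simp only [dualG, add_dotProduct, sum_dotProduct, smul_dotProduct, aVec_dotProduct_vecz hπ,
    bVec_dotProduct_vecz hπ, smul_eq_mul, Finset.sum_add_distrib]
  rw [show lam ⬝ᵥ α = ∑ i, lam i * α i from rfl, show mu ⬝ᵥ β = ∑ j, mu j * β j from rfl]
  ring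

/-- Weak duality between GW-Dual and the Gromov-Wasserstein problem. -/
theorem stmt_8 {m n : ℕ} (α : Fin m → ℝ) (β : Fin n → ℝ)
    (hα : IsProbVec α) (hβ : IsProbVec β)
    (L : Matrix (Fin m × Fin n) (Fin m × Fin n) ℝ) (hL : L.IsSymm)
    (lam : Fin m → ℝ) (mu : Fin n → ℝ)
    (η : Fin m → (Fin m × Fin n → ℝ)) (θ : Fin n → (Fin m × Fin n → ℝ))
    (Z : Matrix (Fin m × Fin n) (Fin m × Fin n) ℝ)
    (y : Fin m × Fin n → ℝ) (t : ℝ)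
    (hdual : GWDualFeasible α β L lam mu η θ Z y t) :
    ∀ π : Matrix (Fin m) (Fin n) ℝ, IsCoupling α β π →
      lam ⬝ᵥ α + mu ⬝ᵥ β - t ≤ gwObj L π := by
  intro π hπ
  obtain ⟨hpsd, hg, hZ⟩ := hdual
  have hx : ∀ p, 0 ≤ vecz π p := fun p => hπ.1 p.1 p.2
  have hblock := hpsd.dotProduct_mulVec_nonneg (fun o => o.elim 1 (vecz π))
  rw [star_trivial, blockMat_quadForm, dualH_quadForm L Z η θ hπ] at hblock
  have hZx : 0 ≤ vecz π ⬝ᵥ Z.mulVec (vecz π) :=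
    Finset.sum_nonneg fun u _ => mul_nonneg (hx u)
      (Finset.sum_nonneg fun v _ => mul_nonneg (hZ u v) (hx v))
  have hgx : dualG α β lam mu η θ y ⬝ᵥ vecz π ≤ 0 :=
    Finset.sum_nonpos fun u _ => mul_nonpos_of_nonpos_of_nonneg (hg u) (hx u)
  rw [dualG_dotProduct lam mu η θ y hπ] at hgx
  linarith
end
end

section
/- (Strong duality between GW-SDP and GW-Dual.) Let L ∈ ℝ^{mn×mn} be symmetric and let α ∈ ℝ^m, β ∈ ℝ^n be probability vectors. Then the infimum of ⟨L, P⟩ over all GW-SDP-feasible pairs (π, P) equals the supremum of λᵀα + μᵀβ − t over all GW-Dual-feasible dual variables (λ, μ, η, θ, Z, y, t). -/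
/-!
The semidefinite program and its dual are put in conic form and the duality gap is closed by
separation.

*Weak duality.* Pairing the two positive semidefinite block matrices gives a nonnegative number
(Schur product theorem), and `pairing` expands it by means of the linear constraints of the primal.

*No gap.* Lift the primal by slack copies of `P` and `vec π`, so that the cone becomes a product
`PSD × (nonnegative matrices) × (nonnegative vectors)` and all couplings between the factors are
linear equations. Let `T` (`constrMap`) collect the homogenized constraints and the objective.
If all constraints of `w` in the cone vanish, then `w = 0` (`eq_zero_of_constr`): the row sums of a
nonnegative `vec π` vanish, hence so do those of the nonnegative `P`. A linear map whose kernel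
meets a closed convex cone only at `0` sends it to a closed cone, so any point outside the image is
strictly separated from it (`farkas_of_ker`). A separating functional with positive weight on the
objective is, after normalization, a dual feasible point (`exists_dual_of_nonneg`): testing it on
rank-one matrices and on the coordinate vectors of the slack factors yields positive
semidefiniteness of the dual block matrix and the sign conditions on `g` and `Z`. Separating
`(0, -1)` shows that the dual is feasible; separating `(b, r)`, with `b` the right-hand side and `r`
below the primal infimum, gives a dual value exceeding `r`.
-/


open Matrix BigOperators

noncomputable section

/-! ### Separation from the linear image of a closed cone -/

/-- Farkas alternative without closure: if the kernel of `T` meets the closed convex cone `C` only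
at `0`, the image `T '' C` is closed, so a point outside it can be strictly separated from it. -/
theorem farkas_of_ker {E F : Type*} [NormedAddCommGroup E] [NormedSpace ℝ E]
    [FiniteDimensional ℝ E] [NormedAddCommGroup F] [NormedSpace ℝ F]
    (C : Set E) (hcl : IsClosed C) (h0 : (0 : E) ∈ C)
    (hadd : ∀ x ∈ C, ∀ y ∈ C, x + y ∈ C)
    (hsmul : ∀ r : ℝ, 0 ≤ r → ∀ x ∈ C, r • x ∈ C)
    (T : E →ₗ[ℝ] F) (hker : ∀ x ∈ C, T x = 0 → x = 0) (b : F) (hb : ∀ x ∈ C, T x ≠ b) :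
    ∃ f : F →L[ℝ] ℝ, (∀ x ∈ C, 0 ≤ f (T x)) ∧ f b < 0 := by
  have : ProperSpace E := FiniteDimensional.proper ℝ E
  have hT : Continuous T := T.continuous_of_finiteDimensional
  -- By compactness of the unit sphere of `C`, `T` is bounded below on `C`.
  obtain ⟨c, hc, hcT⟩ : ∃ c : ℝ, 0 < c ∧ ∀ x ∈ C, c * ‖x‖ ≤ ‖T x‖ := by
    have hK : IsCompact (C ∩ Metric.sphere (0 : E) 1) := (isCompact_sphere 0 1).inter_left hcl
    have key : ∃ c : ℝ, 0 < c ∧ ∀ x ∈ C ∩ Metric.sphere (0 : E) 1, c ≤ ‖T x‖ := by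
      rcases (C ∩ Metric.sphere (0 : E) 1).eq_empty_or_nonempty with he | hne
      · exact ⟨1, one_pos, fun x hx => by simp [he] at hx⟩
      · obtain ⟨x, hx, hmin⟩ := hK.exists_isMinOn hne (hT.norm.continuousOn)
        refine ⟨‖T x‖, norm_pos_iff.2 fun h => ?_, fun z hz => hmin hz⟩
        have := hker x hx.1 h
        have h2 := hx.2
        simp [this] at h2
    obtain ⟨c, hc, h⟩ := key
    refine ⟨c, hc, fun x hx => ?_⟩
    by_cases hx0 : x = 0
    · simp [hx0]
    · have hn : 0 < ‖x‖ := norm_pos_iff.2 hx0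
      have := h (‖x‖⁻¹ • x) ⟨hsmul _ (by positivity) x hx, by
        simp [norm_smul, hn.ne']⟩
      rw [map_smul, norm_smul, norm_inv, norm_norm, inv_mul_eq_div, le_div_iff₀ hn] at this
      exact this
  have hclosed : IsClosed (T '' C) := by
    refine isClosed_of_closure_subset fun y hy => ?_
    -- Points of `T '' C` within distance `1` of `y` come from the ball of radius `R`.
    set R := (‖y‖ + 1) / c
    have hcomp : IsCompact (T '' (C ∩ Metric.closedBall 0 R)) :=
      ((isCompact_closedBall 0 R).inter_left hcl).image hT
    have hy2 : y ∈ closure (T '' C ∩ Metric.ball y 1) :=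
      Metric.isOpen_ball.closure_inter ⟨hy, Metric.mem_ball_self one_pos⟩
    have hsub : T '' C ∩ Metric.ball y 1 ⊆ T '' (C ∩ Metric.closedBall 0 R) := by
      rintro _ ⟨⟨x, hx, rfl⟩, hd⟩
      refine ⟨x, ⟨hx, ?_⟩, rfl⟩
      rw [mem_closedBall_zero_iff, le_div_iff₀ hc]
      have h1 := hcT x hx
      rw [Metric.mem_ball, dist_eq_norm] at hd
      have h2 := norm_sub_norm_le (T x) y
      linarith
    have := closure_minimal hsub hcomp.isClosed hy2
    exact Set.image_mono Set.inter_subset_left this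
  have hconv : Convex ℝ (T '' C) := by
    have : Convex ℝ C := fun x hx y hy a b ha hb _ =>
      hadd _ (hsmul a ha x hx) _ (hsmul b hb y hy)
    exact this.linear_image T
  obtain ⟨f, u, hfu, hf⟩ := geometric_hahn_banach_point_closed (x := b) hconv hclosed
    (by rintro ⟨x, hx, h⟩; exact hb x hx h)
  have hu : u < 0 := by simpa using hf 0 ⟨0, h0, map_zero T⟩
  refine ⟨f, fun x hx => ?_, hfu.trans hu⟩
  -- A negative value of `f ∘ T` on `C` could be scaled down to `u`.
  by_contra! hneg
  have := hf (T ((u / f (T x)) • x)) ⟨_, hsmul _ (div_nonneg_of_nonpos hu.le hneg.le) x hx, rfl⟩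
  rw [map_smul, map_smul, smul_eq_mul, div_mul_cancel₀ _ hneg.ne] at this
  exact lt_irrefl _ this

/-! ### Trace pairing and weak duality -/

section Pairing

variable {m n : ℕ}

theorem trInner_add (A B P : Matrix (Fin m × Fin n) (Fin m × Fin n) ℝ) :
    trInner (A + B) P = trInner A P + trInner B P := by
  simp [trInner, add_mul, Finset.sum_add_distrib]

theorem trInner_sub (A B P : Matrix (Fin m × Fin n) (Fin m × Fin n) ℝ) :
    trInner (A - B) P = trInner A P - trInner B P := by
  simp [trInner, sub_mul, Finset.sum_sub_distrib]

theorem trInner_smul (r : ℝ) (A P : Matrix (Fin m × Fin n) (Fin m × Fin n) ℝ) :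
    trInner (r • A) P = r * trInner A P := by
  simp [trInner, Finset.mul_sum, mul_assoc]

theorem trInner_sum {k : ℕ} (A : Fin k → Matrix (Fin m × Fin n) (Fin m × Fin n) ℝ)
    (P : Matrix (Fin m × Fin n) (Fin m × Fin n) ℝ) :
    trInner (∑ i, A i) P = ∑ i, trInner (A i) P := by
  simp only [trInner, Matrix.sum_apply, Finset.sum_mul]
  rw [Finset.sum_comm (γ := Fin k)]
  exact Finset.sum_congr rfl fun u _ => Finset.sum_comm

theorem trInner_vecMulVec (u w : Fin m × Fin n → ℝ)
    (P : Matrix (Fin m × Fin n) (Fin m × Fin n) ℝ) :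
    trInner (Matrix.vecMulVec u w) P = u ⬝ᵥ P *ᵥ w := by
  simp only [trInner, Matrix.vecMulVec_apply, dotProduct, Matrix.mulVec, Finset.mul_sum]
  exact Finset.sum_congr rfl fun _ _ => Finset.sum_congr rfl fun _ _ => by ring

theorem trInner_vecMulVec_symm (u w : Fin m × Fin n → ℝ)
    {P : Matrix (Fin m × Fin n) (Fin m × Fin n) ℝ} (hP : P.IsSymm) :
    trInner (Matrix.vecMulVec w u) P = u ⬝ᵥ P *ᵥ w := by
  rw [trInner_vecMulVec, Matrix.dotProduct_mulVec, ← Matrix.mulVec_transpose, hP.eq,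
    dotProduct_comm]

/-- Expansion of the pairing of a dual block matrix with a primal one. The multipliers `η`, `θ`
enter only through `P a_i` and `P b_j`, the quantities constrained in the primal. -/
theorem pairing (L Z : Matrix (Fin m × Fin n) (Fin m × Fin n) ℝ)
    (η : Fin m → (Fin m × Fin n → ℝ)) (θ : Fin n → (Fin m × Fin n → ℝ))
    (y : Fin m × Fin n → ℝ) (t : ℝ) {P : Matrix (Fin m × Fin n) (Fin m × Fin n) ℝ}
    (x : Fin m × Fin n → ℝ) (s : ℝ) (hP : P.IsSymm) :
    ∑ a, ∑ b, blockMat (dualH L Z η θ) y t a b * blockMat P x s a b =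
      trInner L P - trInner Z P + ∑ i, η i ⬝ᵥ P *ᵥ aVec i + ∑ j, θ j ⬝ᵥ P *ᵥ bVec j
        + 2 * (y ⬝ᵥ x) + t * s := by
  have hH : trInner (dualH L Z η θ) P = trInner L P - trInner Z P
      + ∑ i, η i ⬝ᵥ P *ᵥ aVec i + ∑ j, θ j ⬝ᵥ P *ᵥ bVec j := by
    have e : ∀ u w : Fin m × Fin n → ℝ,
        trInner (Matrix.vecMulVec u w + Matrix.vecMulVec w u) P = 2 * (u ⬝ᵥ P *ᵥ w) := fun u w => by
      rw [trInner_add, trInner_vecMulVec, trInner_vecMulVec_symm _ _ hP, two_mul]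
    simp only [dualH, trInner_add _ (_ • _), trInner_sub, trInner_smul, trInner_sum, e,
      ← Finset.mul_sum]
    ring
  rw [← hH]
  simp only [Fintype.sum_option, blockMat, Matrix.of_apply, trInner, dotProduct,
    Finset.sum_add_distrib]
  ring

theorem posSemidef_pairing_nonneg {ι : Type*} [Fintype ι] {A B : Matrix ι ι ℝ}
    (hA : A.PosSemidef) (hB : B.PosSemidef) : 0 ≤ ∑ a, ∑ b, A a b * B a b := by
  have := (hA.hadamard hB).dotProduct_mulVec_nonneg (fun _ => 1)
  simpa [dotProduct, Matrix.mulVec] using this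

theorem trInner_nonneg {A P : Matrix (Fin m × Fin n) (Fin m × Fin n) ℝ}
    (hA : ∀ u v, 0 ≤ A u v) (hP : ∀ u v, 0 ≤ P u v) : 0 ≤ trInner A P :=
  Finset.sum_nonneg fun u _ => Finset.sum_nonneg fun v _ => mul_nonneg (hA u v) (hP u v)

theorem isSymm_of_blockMat {P : Matrix (Fin m × Fin n) (Fin m × Fin n) ℝ}
    {x : Fin m × Fin n → ℝ} {s : ℝ} (h : (blockMat P x s).PosSemidef) : P.IsSymm := by
  ext u v
  have := h.isHermitian.apply (some u) (some v)
  simpa [blockMat] using this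

theorem aVec_dotProduct (i : Fin m) (x : Fin m × Fin n → ℝ) :
    aVec i ⬝ᵥ x = ∑ j, x (i, j) := by
  simp [dotProduct, aVec, Fintype.sum_prod_type, Finset.sum_comm]

theorem bVec_dotProduct (j : Fin n) (x : Fin m × Fin n → ℝ) :
    bVec j ⬝ᵥ x = ∑ i, x (i, j) := by
  simp [dotProduct, bVec, Fintype.sum_prod_type]

theorem weak_duality {α : Fin m → ℝ} {β : Fin n → ℝ}
    {L : Matrix (Fin m × Fin n) (Fin m × Fin n) ℝ} {π P lam mu η θ Z y t}
    (hp : GWSDPFeasible α β π P) (hd : GWDualFeasible α β L lam mu η θ Z y t) :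
    lam ⬝ᵥ α + mu ⬝ᵥ β - t ≤ trInner L P := by
  obtain ⟨⟨h1, h2, h3⟩, h4, h5, h6, h7⟩ := hp
  obtain ⟨d1, d2, d3⟩ := hd
  have hpair := posSemidef_pairing_nonneg d1 h4
  rw [pairing _ _ _ _ _ _ _ _ (isSymm_of_blockMat h4)] at hpair
  have hZ := trInner_nonneg d3 h7
  have hg : dualG α β lam mu η θ y ⬝ᵥ vecz π ≤ 0 :=
    Finset.sum_nonpos fun u _ => mul_nonpos_of_nonpos_of_nonneg (d2 u) (h1 _ _)
  have ha : ∀ i, aVec i ⬝ᵥ vecz π = α i := fun i => by rw [aVec_dotProduct, ← h2 i]; rfl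
  have hb : ∀ j, bVec j ⬝ᵥ vecz π = β j := fun j => by rw [bVec_dotProduct, ← h3 j]; rfl
  simp only [dualG, add_dotProduct, sum_dotProduct, smul_dotProduct, ha, hb, smul_eq_mul,
    Finset.sum_add_distrib] at hg
  simp only [h5, h6, dotProduct_smul, smul_eq_mul] at hpair
  simp only [dotProduct] at hg hpair ⊢
  linarith

end Pairing

/-! ### The lifted primal and separating functionals -/

section Farkas

variable {m n : ℕ}

/-- The ambient space of the lifted primal: a matrix indexed by `Option I` with `I = Fin m × Fin n`
(the candidate block matrix, `none` being the homogenizing corner), together with slack copies of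
its `I × I` block and of its last column. -/
abbrev PrimalSpace (m n : ℕ) : Type :=
  (Option (Fin m × Fin n) → Option (Fin m × Fin n) → ℝ) ×
    ((Fin m × Fin n → Fin m × Fin n → ℝ) × (Fin m × Fin n → ℝ))

/-- The closed convex cone `PSD × (nonnegative matrices) × (nonnegative vectors)`. -/
def primalCone (m n : ℕ) : Set (PrimalSpace m n) :=
  {w | (Matrix.of w.1).PosSemidef ∧ (∀ u v, 0 ≤ w.2.1 u v) ∧ ∀ u, 0 ≤ w.2.2 u}

/-- Labels of the scalar coordinates of `constrMap`, from left to right: row sums, column sums,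
`P a_i - α_i x`, `P b_j - β_j x`, `P` minus its slack copy, `x` minus its slack copy, the corner
entry, and the objective value. -/
abbrev ConstrIdx (m n : ℕ) : Type :=
  Fin m ⊕ Fin n ⊕ (Fin m × (Fin m × Fin n)) ⊕ (Fin n × (Fin m × Fin n)) ⊕
    ((Fin m × Fin n) × (Fin m × Fin n)) ⊕ (Fin m × Fin n) ⊕ Unit ⊕ Unit

/-- The family of real numbers with prescribed coordinates in each of the eight blocks. -/
def mkConstr (r : Fin m → ℝ) (c : Fin n → ℝ) (A : Fin m → Fin m × Fin n → ℝ)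
    (B : Fin n → Fin m × Fin n → ℝ) (Q : Fin m × Fin n → Fin m × Fin n → ℝ)
    (p : Fin m × Fin n → ℝ) (s o : ℝ) : ConstrIdx m n → ℝ :=
  Sum.elim r (Sum.elim c (Sum.elim (fun k => A k.1 k.2) (Sum.elim (fun k => B k.1 k.2)
    (Sum.elim (fun k => Q k.1 k.2) (Sum.elim p (Sum.elim (fun _ => s) (fun _ => o)))))))

/-- The `I × I` block of an element of the lifted primal space. -/
def blk (w : PrimalSpace m n) : Matrix (Fin m × Fin n) (Fin m × Fin n) ℝ :=
  Matrix.of fun u v => w.1 (some u) (some v)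

/-- The last column of an element of the lifted primal space. -/
def lastCol (w : PrimalSpace m n) : Fin m × Fin n → ℝ := fun u => w.1 (some u) none

/-- The linear map collecting all homogenized constraints of (GW-SDP) and its objective. -/
def constrMap (α : Fin m → ℝ) (β : Fin n → ℝ)
    (L : Matrix (Fin m × Fin n) (Fin m × Fin n) ℝ) :
    PrimalSpace m n →ₗ[ℝ] (ConstrIdx m n → ℝ) where
  toFun w := mkConstr (fun i => aVec i ⬝ᵥ lastCol w) (fun j => bVec j ⬝ᵥ lastCol w)
    (fun i => blk w *ᵥ aVec i - α i • lastCol w) (fun j => blk w *ᵥ bVec j - β j • lastCol w)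
    (fun u v => blk w u v - w.2.1 u v) (fun u => lastCol w u - w.2.2 u)
    (w.1 none none) (trInner L (blk w))
  map_add' v w := by
    have hb : blk (v + w) = blk v + blk w := rfl
    have hl : lastCol (v + w) = lastCol v + lastCol w := rfl
    have ht : trInner L (blk v + blk w) = trInner L (blk v) + trInner L (blk w) := by
      simp [trInner, mul_add, Finset.sum_add_distrib]
    funext k
    rcases k with i | j | ⟨i, u⟩ | ⟨j, u⟩ | ⟨u, v⟩ | u | _ | _ <;>
      simp [mkConstr, hb, hl, ht, dotProduct_add, Matrix.add_mulVec] <;> ring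
  map_smul' r w := by
    have hb : blk (r • w) = r • blk w := rfl
    have hl : lastCol (r • w) = r • lastCol w := rfl
    have ht : trInner L (r • blk w) = r * trInner L (blk w) := by
      simp only [trInner, Finset.mul_sum, Matrix.smul_apply, smul_eq_mul]
      exact Finset.sum_congr rfl fun _ _ => Finset.sum_congr rfl fun _ _ => by ring
    funext k
    rcases k with i | j | ⟨i, u⟩ | ⟨j, u⟩ | ⟨u, v⟩ | u | _ | _ <;>
      simp [mkConstr, hb, hl, ht, dotProduct_smul, Matrix.smul_mulVec] <;> ring

theorem constrMap_apply (α : Fin m → ℝ) (β : Fin n → ℝ)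
    (L : Matrix (Fin m × Fin n) (Fin m × Fin n) ℝ) (w : PrimalSpace m n) :
    constrMap α β L w = mkConstr (fun i => aVec i ⬝ᵥ lastCol w) (fun j => bVec j ⬝ᵥ lastCol w)
      (fun i => blk w *ᵥ aVec i - α i • lastCol w) (fun j => blk w *ᵥ bVec j - β j • lastCol w)
      (fun u v => blk w u v - w.2.1 u v) (fun u => lastCol w u - w.2.2 u)
      (w.1 none none) (trInner L (blk w)) := rfl

theorem sum_mul_mkConstr (c : ConstrIdx m n → ℝ) (r₁ r₂ r₃ r₄ r₅ r₆ s o) :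
    ∑ k, c k * mkConstr r₁ r₂ r₃ r₄ r₅ r₆ s o k =
      (fun i => c (.inl i)) ⬝ᵥ r₁ + (fun j => c (.inr (.inl j))) ⬝ᵥ r₂
      + ∑ i, (fun u => c (.inr (.inr (.inl (i, u))))) ⬝ᵥ r₃ i
      + ∑ j, (fun u => c (.inr (.inr (.inr (.inl (j, u)))))) ⬝ᵥ r₄ j
      + trInner (Matrix.of fun u v => c (.inr (.inr (.inr (.inr (.inl (u, v))))))) (Matrix.of r₅)
      + (fun u => c (.inr (.inr (.inr (.inr (.inr (.inl u))))))) ⬝ᵥ r₆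
      + c (.inr (.inr (.inr (.inr (.inr (.inr (.inl ()))))))) * s
      + c (.inr (.inr (.inr (.inr (.inr (.inr (.inr ()))))))) * o := by
  simp only [Fintype.sum_sum_type, mkConstr, Sum.elim_inl, Sum.elim_inr, dotProduct, trInner,
    Matrix.of_apply, Finset.univ_unique, Finset.sum_singleton, PUnit.default_eq_unit,
    Fintype.sum_prod_type]
  ring

theorem zero_mem_primalCone : (0 : PrimalSpace m n) ∈ primalCone m n :=
  ⟨Matrix.PosSemidef.zero, fun _ _ => le_rfl, fun _ => le_rfl⟩

theorem add_mem_primalCone {v w : PrimalSpace m n} (hv : v ∈ primalCone m n)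
    (hw : w ∈ primalCone m n) : v + w ∈ primalCone m n :=
  ⟨hv.1.add hw.1, fun a b => add_nonneg (hv.2.1 a b) (hw.2.1 a b),
    fun a => add_nonneg (hv.2.2 a) (hw.2.2 a)⟩

theorem smul_mem_primalCone {r : ℝ} (hr : 0 ≤ r) {w : PrimalSpace m n}
    (hw : w ∈ primalCone m n) : r • w ∈ primalCone m n :=
  ⟨hw.1.smul hr, fun a b => mul_nonneg hr (hw.2.1 a b), fun a => mul_nonneg hr (hw.2.2 a)⟩

theorem isClosed_primalCone : IsClosed (primalCone m n) := by
  have h : primalCone m n =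
      {w | (Matrix.of w.1).IsHermitian} ∩
      ({w | ∀ x, 0 ≤ star x ⬝ᵥ ((Matrix.of w.1) *ᵥ x)} ∩
      ({w | ∀ u v, 0 ≤ w.2.1 u v} ∩ {w | ∀ u, 0 ≤ w.2.2 u})) := by
    ext w
    simp only [primalCone, Matrix.posSemidef_iff_dotProduct_mulVec, Set.mem_ofPred_eq,
      Set.mem_inter_iff, and_assoc]
  rw [h]
  refine IsClosed.inter ?_ (IsClosed.inter ?_ (IsClosed.inter ?_ ?_))
  · have : {w : PrimalSpace m n | (Matrix.of w.1).IsHermitian} =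
        {w | ∀ a b, w.1 b a = w.1 a b} := by
      ext w
      exact ⟨fun h a b => by simpa using h.apply a b, fun h => by ext a b; simpa using h a b⟩
    rw [this]
    simp only [Set.ofPred_forall]
    exact isClosed_iInter fun a => isClosed_iInter fun b =>
      isClosed_eq (by fun_prop) (by fun_prop)
  · simp only [Set.ofPred_forall, dotProduct, Matrix.mulVec, Matrix.of_apply]
    exact isClosed_iInter fun x => isClosed_le (by fun_prop) (by fun_prop)
  · simp only [Set.ofPred_forall]
    exact isClosed_iInter fun a => isClosed_iInter fun b =>
      isClosed_le (by fun_prop) (by fun_prop)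
  · simp only [Set.ofPred_forall]
    exact isClosed_iInter fun a => isClosed_le (by fun_prop) (by fun_prop)

theorem eq_blockMat {w : PrimalSpace m n} (hw : w ∈ primalCone m n) :
    Matrix.of w.1 = blockMat (blk w) (lastCol w) (w.1 none none) := by
  ext a b
  have h := fun a b => hw.1.isHermitian.apply a b
  rcases a with _ | a <;> rcases b with _ | b <;> simp [blockMat, blk, lastCol]
  simpa using (h (some b) none)

theorem mkConstr_injective {r₁ r₁' : Fin m → ℝ} {r₂ r₂' : Fin n → ℝ}
    {r₃ r₃' : Fin m → Fin m × Fin n → ℝ} {r₄ r₄' : Fin n → Fin m × Fin n → ℝ}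
    {r₅ r₅' : Fin m × Fin n → Fin m × Fin n → ℝ} {r₆ r₆' : Fin m × Fin n → ℝ} {s s' o o' : ℝ}
    (h : mkConstr r₁ r₂ r₃ r₄ r₅ r₆ s o = mkConstr r₁' r₂' r₃' r₄' r₅' r₆' s' o') :
    r₁ = r₁' ∧ r₂ = r₂' ∧ r₃ = r₃' ∧ r₄ = r₄' ∧ r₅ = r₅' ∧ r₆ = r₆' ∧ s = s' ∧ o = o' :=
  ⟨funext fun i => congrFun h (.inl i), funext fun i => congrFun h (.inr (.inl i)),
    funext₂ fun i u => congrFun h (.inr (.inr (.inl (i, u)))),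
    funext₂ fun i u => congrFun h (.inr (.inr (.inr (.inl (i, u))))),
    funext₂ fun i u => congrFun h (.inr (.inr (.inr (.inr (.inl (i, u)))))),
    funext fun u => congrFun h (.inr (.inr (.inr (.inr (.inr (.inl u)))))),
    congrFun h (.inr (.inr (.inr (.inr (.inr (.inr (.inl ()))))))),
    congrFun h (.inr (.inr (.inr (.inr (.inr (.inr (.inr ())))))))⟩

/-- The recession condition: homogenized constraints force a point of the cone to vanish. -/
theorem eq_zero_of_constr {α : Fin m → ℝ} {β : Fin n → ℝ}
    {L : Matrix (Fin m × Fin n) (Fin m × Fin n) ℝ} {w : PrimalSpace m n}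
    (hw : w ∈ primalCone m n) {o : ℝ} (h : constrMap α β L w = mkConstr 0 0 0 0 0 0 0 o) :
    w = 0 := by
  obtain ⟨h1, -, h3, -, h5, h6, h7, -⟩ :=
    mkConstr_injective ((constrMap_apply _ _ _ _).symm.trans h)
  have hx : ∀ u, lastCol w u = w.2.2 u := fun u => sub_eq_zero.1 (congrFun h6 u)
  have hP : ∀ u v, blk w u v = w.2.1 u v := fun u v => sub_eq_zero.1 (congrFun₂ h5 u v)
  have hx0 : lastCol w = 0 := by
    funext ⟨i, j⟩
    have h := congrFun h1 i
    simp only [aVec_dotProduct, Pi.zero_apply] at h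
    exact (Finset.sum_eq_zero_iff_of_nonneg fun j _ => (hx (i, j)).symm ▸ hw.2.2 (i, j)).1 h j
      (Finset.mem_univ j)
  have hP0 : blk w = 0 := by
    ext u ⟨i, j⟩
    have h := congrFun₂ h3 i u
    simp only [hx0, smul_zero, sub_zero, Matrix.mulVec, Pi.zero_apply] at h
    rw [dotProduct_comm, aVec_dotProduct] at h
    exact (Finset.sum_eq_zero_iff_of_nonneg
      fun j _ => (hP u (i, j)).symm ▸ hw.2.1 u (i, j)).1 h j (Finset.mem_univ j)
  have e1 : Matrix.of w.1 = 0 := by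
    rw [eq_blockMat hw, hP0, hx0, h7]
    ext a b
    rcases a with _ | a <;> rcases b with _ | b <;> simp [blockMat]
  refine Prod.ext e1 (Prod.ext ?_ ?_)
  · funext u v
    exact (hP u v).symm.trans (by rw [hP0]; rfl)
  · funext u
    exact (hx u).symm.trans (by rw [hx0]; rfl)

theorem exists_feasible_of_constr {α : Fin m → ℝ} {β : Fin n → ℝ}
    {L : Matrix (Fin m × Fin n) (Fin m × Fin n) ℝ} {w : PrimalSpace m n}
    (hw : w ∈ primalCone m n) {o : ℝ} (h : constrMap α β L w = mkConstr α β 0 0 0 0 1 o) :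
    ∃ π P, GWSDPFeasible α β π P ∧ o = trInner L P := by
  obtain ⟨h1, h2, h3, h4, h5, h6, h7, h8⟩ :=
    mkConstr_injective ((constrMap_apply _ _ _ _).symm.trans h)
  have hx : ∀ u, lastCol w u = w.2.2 u := fun u => sub_eq_zero.1 (congrFun h6 u)
  have hP : ∀ u v, blk w u v = w.2.1 u v := fun u v => sub_eq_zero.1 (congrFun₂ h5 u v)
  refine ⟨fun i j => lastCol w (i, j), blk w, ⟨⟨fun i j => ?_, fun i => ?_, fun j => ?_⟩,
    ?_, fun i => sub_eq_zero.1 (congrFun h3 i), fun j => sub_eq_zero.1 (congrFun h4 j),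
    fun u v => ?_⟩, h8.symm⟩
  · exact (hw.2.2 (i, j)).trans_eq (hx (i, j)).symm
  · rw [← aVec_dotProduct]; exact congrFun h1 i
  · rw [← bVec_dotProduct]; exact congrFun h2 j
  · have := hw.1
    rwa [eq_blockMat hw, h7] at this
  · rw [hP]; exact hw.2.1 u v

theorem exists_constr_of_feasible {α : Fin m → ℝ} {β : Fin n → ℝ}
    {L : Matrix (Fin m × Fin n) (Fin m × Fin n) ℝ} {π P} (h : GWSDPFeasible α β π P) :
    ∃ w ∈ primalCone m n, constrMap α β L w = mkConstr α β 0 0 0 0 1 (trInner L P) := by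
  obtain ⟨⟨h1, h2, h3⟩, h4, h5, h6, h7⟩ := h
  refine ⟨(blockMat P (vecz π) 1, P, vecz π), ⟨h4, h7, fun u => h1 _ _⟩, ?_⟩
  set w : PrimalSpace m n := (blockMat P (vecz π) 1, P, vecz π)
  have hb : blk w = P := rfl
  have hl : lastCol w = vecz π := rfl
  rw [constrMap_apply, hb, hl]
  congr 1
  · funext i; rw [aVec_dotProduct]; exact h2 i
  · funext j; rw [bVec_dotProduct]; exact h3 j
  · funext i; rw [h5 i, sub_self]; rfl
  · funext j; rw [h6 j, sub_self]; rfl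
  · funext u v; exact sub_self _
  · funext u; exact sub_self _

theorem trInner_transpose (A : Matrix (Fin m × Fin n) (Fin m × Fin n) ℝ)
    {P : Matrix (Fin m × Fin n) (Fin m × Fin n) ℝ} (hP : P.IsSymm) :
    trInner Aᵀ P = trInner A P := by
  simp only [trInner, Matrix.transpose_apply]
  rw [Finset.sum_comm]
  exact Finset.sum_congr rfl fun u _ => Finset.sum_congr rfl fun v _ => by rw [hP.apply u v]

theorem isHermitian_blockMat_dualH {L Z : Matrix (Fin m × Fin n) (Fin m × Fin n) ℝ}
    (hL : L.IsSymm) (hZ : Z.IsSymm) (η : Fin m → (Fin m × Fin n → ℝ))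
    (θ : Fin n → (Fin m × Fin n → ℝ)) (y : Fin m × Fin n → ℝ) (t : ℝ) :
    (blockMat (dualH L Z η θ) y t).IsHermitian := by
  ext a b
  rcases a with _ | a <;> rcases b with _ | b <;> simp [blockMat]
  simp [dualH, Matrix.sum_apply, Matrix.vecMulVec_apply, hL.apply a b, hZ.apply a b, mul_comm,
    add_comm]

/-- A functional that is nonnegative on the image of the cone and has positive weight on the
objective is, up to normalization, a dual feasible point. Its coordinates on the row-sum and
column-sum blocks give `-lam` and `-mu`, on the next two blocks `η` and `θ`, on the corner `t`; the
symmetrized coordinates on the `P`-slack block give `-Z`, and those on the `x`-slack block give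
`g`, which determines `y`. -/
theorem exists_dual_of_nonneg {α : Fin m → ℝ} {β : Fin n → ℝ}
    {L : Matrix (Fin m × Fin n) (Fin m × Fin n) ℝ} (hL : L.IsSymm)
    (f : (ConstrIdx m n → ℝ) →L[ℝ] ℝ)
    (hf : ∀ w ∈ primalCone m n, 0 ≤ f (constrMap α β L w))
    (hpos : 0 < f (mkConstr 0 0 0 0 0 0 0 1)) :
    ∃ lam mu η θ Z y t, GWDualFeasible α β L lam mu η θ Z y t ∧
      lam ⬝ᵥ α + mu ⬝ᵥ β - t =
        -(f (mkConstr α β 0 0 0 0 1 0) / f (mkConstr 0 0 0 0 0 0 0 1)) := by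
  set κ := f (mkConstr 0 0 0 0 0 0 0 1) with hκ
  set c : ConstrIdx m n → ℝ := fun k => f (Pi.single k 1) / κ with hc
  have hfc : ∀ z, f z / κ = ∑ k, c k * z k := fun z => by
    have := (f : (ConstrIdx m n → ℝ) →ₗ[ℝ] ℝ).pi_apply_eq_sum_univ z
    simp only [ContinuousLinearMap.coe_coe] at this
    rw [this, Finset.sum_div]
    refine Finset.sum_congr rfl fun k _ => ?_
    have e : (fun j => if k = j then (1 : ℝ) else 0) = Pi.single k 1 := by
      funext j; simp [Pi.single_apply, eq_comm]
    rw [e, smul_eq_mul, hc]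
    ring
  have hfc' : ∀ w ∈ primalCone m n, 0 ≤ ∑ k, c k * constrMap α β L w k := fun w hw => by
    rw [← hfc]; exact div_nonneg (hf w hw) hpos.le
  have hobj : c (.inr (.inr (.inr (.inr (.inr (.inr (.inr ()))))))) = 1 := by
    have := hfc (mkConstr 0 0 0 0 0 0 0 1)
    rw [← hκ, div_self hpos.ne', sum_mul_mkConstr] at this
    simpa [trInner] using this.symm
  have hval := hfc (mkConstr α β 0 0 0 0 1 0)
  rw [hval]
  clear_value c
  clear hval hfc hc hf
  rw [sum_mul_mkConstr]
  simp only [constrMap_apply, sum_mul_mkConstr, hobj] at hfc'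
  set c₁ := fun i => c (.inl i)
  set c₂ := fun j => c (.inr (.inl j))
  set c₃ := fun i u => c (.inr (.inr (.inl (i, u))))
  set c₄ := fun j u => c (.inr (.inr (.inr (.inl (j, u)))))
  set W : Matrix (Fin m × Fin n) (Fin m × Fin n) ℝ :=
    Matrix.of fun u v => c (.inr (.inr (.inr (.inr (.inl (u, v))))))
  set c₆ := fun u => c (.inr (.inr (.inr (.inr (.inr (.inl u))))))
  set c₇ := c (.inr (.inr (.inr (.inr (.inr (.inr (.inl ())))))))
  have hW : ∀ u v, W u v ≤ 0 := fun u v => by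
    have := hfc' (0, fun a b => if a = u then if b = v then 1 else 0 else 0, 0)
      ⟨Matrix.PosSemidef.zero, fun a b => by dsimp only; split_ifs <;> norm_num, fun _ => le_rfl⟩
    have hb : ∀ q, blk ((0, q) : PrimalSpace m n) = 0 := fun _ => rfl
    have hl : ∀ q, lastCol ((0, q) : PrimalSpace m n) = 0 := fun _ => rfl
    simpa [hb, hl, trInner, ← Pi.zero_def] using this
  have hc₆ : ∀ u, c₆ u ≤ 0 := fun u => by
    have := hfc' (0, 0, fun a => if a = u then 1 else 0)
      ⟨Matrix.PosSemidef.zero, fun _ _ => le_rfl, fun a => by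
        dsimp only; split_ifs <;> norm_num⟩
    have hb : ∀ q, blk ((0, q) : PrimalSpace m n) = 0 := fun _ => rfl
    have hl : ∀ q, lastCol ((0, q) : PrimalSpace m n) = 0 := fun _ => rfl
    simpa [hb, hl, trInner, dotProduct, ← Pi.zero_def] using this
  set Z : Matrix (Fin m × Fin n) (Fin m × Fin n) ℝ := (-(1 / 2) : ℝ) • (W + Wᵀ) with hZ
  set y : Fin m × Fin n → ℝ := (1 / 2 : ℝ) • (∑ i, c₁ i • aVec i + ∑ j, c₂ j • bVec j
    - ∑ i, α i • c₃ i - ∑ j, β j • c₄ j + c₆) with hy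
  refine ⟨-c₁, -c₂, c₃, c₄, Z, y, c₇, ⟨.of_dotProduct_mulVec_nonneg
    (isHermitian_blockMat_dualH hL ?_ _ _ _ _) fun v => ?_, fun u => ?_, fun u v => ?_⟩, ?_⟩
  · ext a b
    simp [hZ, add_comm]
  · -- The quadratic form at `v` is the functional evaluated at the rank-one matrix `v vᵀ`.
    set w : PrimalSpace m n := (fun a b => v a * v b, 0, 0) with hw
    have hwC : w ∈ primalCone m n :=
      ⟨Matrix.posSemidef_vecMulVec_self_star v, fun _ _ => le_rfl, fun _ => le_rfl⟩
    have hsym : (blk w).IsSymm := by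
      ext a b
      exact mul_comm _ _
    have hform : star v ⬝ᵥ blockMat (dualH L Z c₃ c₄) y c₇ *ᵥ v =
        ∑ a, ∑ b, blockMat (dualH L Z c₃ c₄) y c₇ a b * Matrix.of w.1 a b := by
      simp only [dotProduct, Matrix.mulVec, Finset.mul_sum, star_trivial, Matrix.of_apply, hw]
      exact Finset.sum_congr rfl fun _ _ => Finset.sum_congr rfl fun _ _ => by ring
    have h := hfc' w hwC
    have hZW : trInner Z (blk w) = -trInner W (blk w) := by
      rw [hZ, trInner_smul, trInner_add, trInner_transpose _ hsym]; ring
    have hyx : 2 * (y ⬝ᵥ lastCol w) = ∑ i, c₁ i * aVec i ⬝ᵥ lastCol w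
        + ∑ j, c₂ j * bVec j ⬝ᵥ lastCol w - ∑ i, α i * c₃ i ⬝ᵥ lastCol w
        - ∑ j, β j * c₄ j ⬝ᵥ lastCol w + c₆ ⬝ᵥ lastCol w := by
      simp only [hy, smul_dotProduct, add_dotProduct, sub_dotProduct, sum_dotProduct, smul_eq_mul]
      ring
    have hslack : (Matrix.of fun a b => blk w a b - w.2.1 a b) = blk w := by
      ext a b; exact sub_zero _
    have hslack' : (fun a => lastCol w a - w.2.2 a) = lastCol w := by
      funext a; exact sub_zero _
    rw [hform, eq_blockMat hwC, pairing _ _ _ _ _ _ _ _ hsym, hZW, hyx]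
    rw [hslack, hslack'] at h
    simp only [dotProduct_sub, dotProduct_smul, smul_eq_mul, Finset.sum_sub_distrib] at h
    rw [dotProduct, dotProduct] at h
    linarith
  · have hg : dualG α β (-c₁) (-c₂) c₃ c₄ y u = c₆ u := by
      simp only [dualG, hy, Finset.sum_add_distrib, Pi.add_apply, Pi.sub_apply, Pi.smul_apply,
        Pi.neg_apply, Finset.sum_apply, smul_eq_mul, neg_mul, Finset.sum_neg_distrib]
      ring
    exact hg.trans_le (hc₆ u)
  · have h1 := hW u v
    have h2 := hW v u
    simp only [hZ, Matrix.smul_apply, Matrix.add_apply, Matrix.transpose_apply, smul_eq_mul]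
    linarith
  · simp [trInner, neg_dotProduct, ← Pi.zero_def]
    ring

end Farkas

/-- Strong duality between GW-SDP and GW-Dual. -/
theorem stmt_10 {m n : ℕ} (α : Fin m → ℝ) (β : Fin n → ℝ)
    (hα : IsProbVec α) (hβ : IsProbVec β)
    (L : Matrix (Fin m × Fin n) (Fin m × Fin n) ℝ) (hL : L.IsSymm) :
    sInf {r : ℝ | ∃ π P, GWSDPFeasible α β π P ∧ r = trInner L P} =
      sSup {r : ℝ | ∃ lam mu η θ Z y t, GWDualFeasible α β L lam mu η θ Z y t ∧
        r = lam ⬝ᵥ α + mu ⬝ᵥ β - t} := by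
  have hsep := fun b hb => farkas_of_ker (primalCone m n) isClosed_primalCone zero_mem_primalCone
    (fun _ hv _ hw => add_mem_primalCone hv hw) (fun _ hr _ hw => smul_mem_primalCone hr hw)
    (constrMap α β L) (fun w hw h => eq_zero_of_constr (o := 0) hw (h.trans (by
      funext k
      rcases k with i | j | ⟨i, u⟩ | ⟨j, u⟩ | ⟨u, v⟩ | u | _ | _ <;> rfl))) b hb
  have hlin : ∀ (f : (ConstrIdx m n → ℝ) →L[ℝ] ℝ) r, f (mkConstr α β 0 0 0 0 1 r) =
      f (mkConstr α β 0 0 0 0 1 0) + r * f (mkConstr 0 0 0 0 0 0 0 1) := fun f r => by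
    rw [← smul_eq_mul, ← map_smul, ← map_add]
    congr 1
    funext k
    rcases k with i | j | ⟨i, u⟩ | ⟨j, u⟩ | ⟨u, v⟩ | u | _ | _ <;> simp [mkConstr]
  -- The product coupling is feasible.
  obtain ⟨π₀, P₀, h₀⟩ : ∃ π P, GWSDPFeasible α β π P := by
    set x : Fin m × Fin n → ℝ := fun p => α p.1 * β p.2 with hx
    have hxa : ∀ i, x ⬝ᵥ aVec i = α i := fun i => by
      rw [dotProduct_comm, aVec_dotProduct]; simp [hx, ← Finset.mul_sum, hβ.2]
    have hxb : ∀ j, x ⬝ᵥ bVec j = β j := fun j => by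
      rw [dotProduct_comm, bVec_dotProduct]; simp [hx, ← Finset.sum_mul, hα.2]
    refine ⟨fun i j => α i * β j, Matrix.vecMulVec x x, ⟨fun i j => mul_nonneg (hα.1 i) (hβ.1 j),
      fun i => by rw [← Finset.mul_sum, hβ.2, mul_one],
      fun j => by rw [← Finset.sum_mul, hα.2, one_mul]⟩, ?_, fun i => ?_, fun j => ?_,
      fun u v => mul_nonneg (mul_nonneg (hα.1 _) (hβ.1 _)) (mul_nonneg (hα.1 _) (hβ.1 _))⟩
    · have h := Matrix.posSemidef_vecMulVec_self_star
        (fun a : Option (Fin m × Fin n) => a.elim 1 x)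
      convert h using 1
      ext a b
      rcases a with _ | a <;> rcases b with _ | b <;>
        simp [blockMat, vecz, hx, Matrix.vecMulVec_apply]
    · rw [Matrix.vecMulVec_mulVec, hxa]; ext u; simp [vecz, hx, mul_comm]
    · rw [Matrix.vecMulVec_mulVec, hxb]; ext u; simp [vecz, hx, mul_comm]
  set Pr := {r : ℝ | ∃ π P, GWSDPFeasible α β π P ∧ r = trInner L P} with hPr
  set Du := {r : ℝ | ∃ lam mu η θ Z y t, GWDualFeasible α β L lam mu η θ Z y t ∧
        r = lam ⬝ᵥ α + mu ⬝ᵥ β - t} with hDu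
  have hweak : ∀ d ∈ Du, ∀ p ∈ Pr, d ≤ p := by
    rintro _ ⟨lam, mu, η, θ, Z, y, t, hd, rfl⟩ _ ⟨π, P, hp, rfl⟩
    exact weak_duality hp hd
  have hPne : Pr.Nonempty := ⟨_, π₀, P₀, h₀, rfl⟩
  have hDne : Du.Nonempty := by
    -- Separate `(0, -1)`: a point of the cone with zero constraints is zero, so its objective
    -- value cannot be `-1`.
    obtain ⟨f, hf, hneg⟩ := hsep (mkConstr 0 0 0 0 0 0 0 (-1)) fun w hw h => by
      have h0 := eq_zero_of_constr hw h
      rw [h0, map_zero] at h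
      have := congrFun h (.inr (.inr (.inr (.inr (.inr (.inr (.inr ())))))))
      norm_num [mkConstr] at this
    have hm : (mkConstr 0 0 0 0 0 0 0 (-1) : ConstrIdx m n → ℝ) =
        -mkConstr 0 0 0 0 0 0 0 1 := by
      funext k
      rcases k with i | j | ⟨i, u⟩ | ⟨j, u⟩ | ⟨u, v⟩ | u | _ | _ <;> simp [mkConstr]
    rw [hm, map_neg, neg_lt_zero] at hneg
    obtain ⟨lam, mu, η, θ, Z, y, t, hd, -⟩ := exists_dual_of_nonneg hL f hf hneg
    exact ⟨_, lam, mu, η, θ, Z, y, t, hd, rfl⟩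
  have hPbd : BddBelow Pr := hDne.imp fun d hd p hp => hweak d hd p hp
  have hDbd : BddAbove Du := hPne.imp fun p hp d hd => hweak d hd p hp
  refine le_antisymm ?_ (csSup_le hDne fun d hd => le_csInf hPne fun p hp => hweak d hd p hp)
  by_contra! hlt
  obtain ⟨r, hr1, hr2⟩ := exists_between hlt
  obtain ⟨f, hf, hneg⟩ := hsep (mkConstr α β 0 0 0 0 1 r) fun w hw h =>
    (csInf_le hPbd (exists_feasible_of_constr hw h)).not_gt hr2
  obtain ⟨w, hw, hwT⟩ := exists_constr_of_feasible (L := L) h₀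
  have hp := hf w hw
  have hrP : r < trInner L P₀ := hr2.trans_le (csInf_le hPbd ⟨π₀, P₀, h₀, rfl⟩)
  rw [hwT, hlin] at hp
  rw [hlin] at hneg
  -- The functional is nonnegative at a primal value above `r` and negative at `r`, so its weight
  -- on the objective is positive.
  have hpos : 0 < f (mkConstr 0 0 0 0 0 0 0 1) := by
    by_contra! hle
    nlinarith
  obtain ⟨lam, mu, η, θ, Z, y, t, hd, hval⟩ := exists_dual_of_nonneg hL f hf hpos
  have hle := le_csSup hDbd ⟨lam, mu, η, θ, Z, y, t, hd, rfl⟩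
  have : r < lam ⬝ᵥ α + mu ⬝ᵥ β - t := by
    rw [hval, ← neg_div, lt_div_iff₀ hpos]
    linarith
  linarith
end
end
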